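/- arXiv:2001.07227 — 4 statements merged into one kernel-verified Lean document; each statement's English description precedes it below -/
import Mathlib

section
/- Corollary 1 (BPC-VO): Let K, L be positive integers. Suppose n workers have derivative sets U_1, …, U_n ⊆ {0,…,K−1}×{0,…,L−1}, each vertically ordered (i.e., N-zig-zag ordered with parameter μ_B = L, so downward closed with respect to the score S_V(k, l) = L(k−1) + l on 1-indexed pairs), with Σ_i |U_i| = KL. Then the KL×KL interpolation matrix M built from the nodes z_i = (x_i, y_i) with derivative sets U_i satisfies det(M) ≠ 0 for almost all choices of the evaluation points (x_1, y_1, …, x_n, y_n) ∈ (ℝ²)^n (the exceptional set has Lebesgue measure zero). In other words, any KL computations received by the master under the vertical computation order suffice for decoding almost surely. -/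
/-!
The determinant of the interpolation matrix is a polynomial in the nodes, homogeneous because
rescaling every node by `c` multiplies the entry in row `(dx, dy)` and column `(k, l)` by
`c ^ (k + l - dx - dy)`. If it is nonzero at one configuration `v`, homogeneity and continuity
make it a nonzero univariate polynomial on every line of direction `v`; each such line meets the
zero set in finitely many points, so the zero set is Lebesgue null
(`volume_det_eq_zero_of_exists`).

A configuration with nonzero determinant comes from a weight argument. Give the column `(k, l)`
the score `s = L * k + l` and cut the scores `0, …, K * L - 1` into consecutive blocks, the
`i`-th of length `|U i|`. For the nodes `(T ^ (2 * L * i), T ^ (2 * i))`, the row of order `d`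
of worker `i` has in the column of score `s` the entry `T ^ (2 * i * (s - score d))` times a
product of falling factorials. A suitable rescaling of rows and columns makes each power of `T`
equal to `1` when `s` lies in the `i`-th block and a negative power otherwise (`phase_lt`), so as
`T → ∞` the rescaled matrix tends to a block diagonal one (`exists_det_ne_zero`).

The blocks of the limit are invertible (`block_unisolvent`): vertical ordering makes `U i` the set
of orders of score less than `m = |U i| = q * L + r`, and among `m` consecutive scores, `r` of the
values of `l` occur with `q + 1` values of `k` and the others with `q`. Vanishing on the block
first kills the coefficients with `dx = q`, then all others, by univariate interpolation in the
basis of falling factorials (`falling_unisolvent`).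
-/


open MeasureTheory

noncomputable section

/-- Entry of the Hermite row of order `(dx, dy)` at the node `(x, y)`, in the column indexed
by the monomial exponents `(k, l)`:
`(∂^{dx+dy}/∂x^{dx}∂y^{dy})(x^k y^l)` evaluated at `(x, y)`. -/
def hEntry (dx dy k l : ℕ) (x y : ℝ) : ℝ :=
  if dx ≤ k ∧ dy ≤ l then
    (Nat.descFactorial k dx : ℝ) * (Nat.descFactorial l dy : ℝ) * x ^ (k - dx) * y ^ (l - dy)
  else 0

/-- A derivative set `U ⊆ {0,…,K−1}×{0,…,L−1}` is vertically ordered (column-by-column filling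
of the derivative order space): `(i, j) ∈ U` implies every `(k, l)` with
`L·k + l ≤ L·i + j` lies in `U`. -/
def VerticallyOrdered (K L : ℕ) (U : Finset (Fin K × Fin L)) : Prop :=
  ∀ d ∈ U, ∀ d' : Fin K × Fin L,
    L * (d'.1 : ℕ) + (d'.2 : ℕ) ≤ L * (d.1 : ℕ) + (d.2 : ℕ) → d' ∈ U

/-- The `KL × KL` interpolation matrix built from the nodes `z i` with derivative sets `U i`,
where the bijection `e` enumerates the rows: the row corresponding to the derivative order
`d ∈ U i` is the Hermite row of order `d` at the node `z i`. -/
def interpMatrix (K L n : ℕ) (U : Fin n → Finset (Fin K × Fin L))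
    (e : (Σ i : Fin n, {d : Fin K × Fin L // d ∈ U i}) ≃ (Fin K × Fin L))
    (z : Fin n → ℝ × ℝ) : Matrix (Fin K × Fin L) (Fin K × Fin L) ℝ :=
  Matrix.of fun r c =>
    hEntry (((e.symm r).2.1.1 : ℕ)) (((e.symm r).2.1.2 : ℕ)) ((c.1 : ℕ)) ((c.2 : ℕ))
      (z (e.symm r).1).1 (z (e.symm r).1).2

open Filter Topology

/-! ### Unisolvence on blocks of consecutive scores -/

/-- A combination of the falling factorials of order less than `q` that vanishes at `q` points
is trivial. -/
lemma falling_unisolvent (q A : ℕ) (hA : q ≤ A) (c : ℕ → ℝ) (hc : ∀ a, q ≤ a → c a = 0)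
    (f : ℕ → ℕ) (hf : ∀ i < q, ∀ j < q, f i = f j → i = j)
    (h : ∀ j < q, ∑ a ∈ Finset.range A, c a * (Nat.descFactorial (f j) a : ℝ) = 0) (a : ℕ) :
    c a = 0 := by
  by_cases ha : q ≤ a
  · exact hc a ha
  have h' : ∀ j < q, ∑ a ∈ Finset.range q, c a * (Nat.descFactorial (f j) a : ℝ) = 0 := by
    intro j hj
    rw [← h j hj]
    apply Finset.sum_subset (Finset.range_subset_range.2 hA)
    intro x _ hx
    rw [hc x (by simpa using hx), zero_mul]
  have hdet := Matrix.det_eval_matrixOfPolynomials_eq_det_vandermonde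
    (fun i : Fin q => (f i : ℝ)) (fun j : Fin q => descPochhammer ℝ j)
    (fun i => descPochhammer_natDegree ℝ i) (fun i => monic_descPochhammer ℝ i)
  have hne : (Matrix.vandermonde fun i : Fin q => (f i : ℝ)).det ≠ 0 := by
    rw [Matrix.det_vandermonde_ne_zero_iff]
    intro i j hij
    exact Fin.ext (hf i i.2 j j.2 (Nat.cast_injective (R := ℝ) hij))
  rw [hdet] at hne
  have hz := Matrix.eq_zero_of_mulVec_eq_zero hne (v := fun a : Fin q => c a) (by
    funext j
    have := h' j j.2
    rw [Finset.sum_range] at this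
    simp only [Matrix.mulVec, dotProduct, Matrix.of_apply, descPochhammer_eval_eq_descFactorial,
      Pi.zero_apply]
    rw [← this]
    exact Finset.sum_congr rfl fun _ _ => mul_comm _ _)
  exact congrFun hz ⟨a, by omega⟩

/-- The products of falling factorials of the `m` orders of lowest score are unisolvent on any
`m` lattice points of consecutive scores `B, …, B + m - 1`. -/
lemma block_unisolvent (L m B A : ℕ) (hL : 0 < L) (hA : m ≤ L * A) (C : ℕ → ℕ → ℝ)
    (hC : ∀ a b, (L ≤ b ∨ m ≤ L * a + b) → C a b = 0)
    (h : ∀ k l, l < L → B ≤ L * k + l → L * k + l < B + m →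
      ∑ a ∈ Finset.range A, ∑ b ∈ Finset.range L,
        C a b * ((Nat.descFactorial k a : ℝ) * (Nat.descFactorial l b : ℝ)) = 0) (a b : ℕ) :
    C a b = 0 := by
  set q := m / L with hq
  set r := m % L with hr
  have hm : L * q + r = m := Nat.div_add_mod m L
  have hrL : r < L := Nat.mod_lt _ hL
  set H : ℕ → ℕ → ℝ := fun l a => ∑ b ∈ Finset.range L, C a b * (Nat.descFactorial l b : ℝ)
    with hH
  have hqA : q ≤ A := by
    by_contra hcon
    have : L * (A + 1) ≤ L * q := Nat.mul_le_mul_left _ (by omega)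
    rw [Nat.mul_add] at this
    omega
  have hqA' : 0 < r → q + 1 ≤ A := by
    intro hr0
    by_contra hcon
    have : L * A ≤ L * q := Nat.mul_le_mul_left _ (by omega)
    omega
  have hHbig : ∀ l a, q + 1 ≤ a → H l a = 0 := by
    intro l a ha
    apply Finset.sum_eq_zero
    intro b _
    have : L * (q + 1) ≤ L * a := Nat.mul_le_mul_left _ ha
    rw [Nat.mul_add] at this
    rw [hC a b (Or.inr (by omega)), zero_mul]
  -- The points of the block with second coordinate `(B + j) % L`.
  have hval : ∀ j p, j + L * p < m →
      ∑ a ∈ Finset.range A, H ((B + j) % L) a *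
        (Nat.descFactorial ((B + j) / L + p) a : ℝ) = 0 := by
    intro j p hjp
    have e1 : L * ((B + j) / L + p) + (B + j) % L = B + j + L * p := by
      have := Nat.div_add_mod (B + j) L
      rw [Nat.mul_add]
      omega
    rw [← h ((B + j) / L + p) ((B + j) % L) (Nat.mod_lt _ hL) (by omega) (by omega)]
    refine Finset.sum_congr rfl fun a _ => ?_
    rw [hH, Finset.sum_mul]
    exact Finset.sum_congr rfl fun b _ => by ring
  have hinj : ∀ i < L, ∀ j < L, (B + i) % L = (B + j) % L → i = j := by
    intro i hi j hj hij
    have : i ≡ j [MOD L] := Nat.ModEq.add_left_cancel' B hij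
    exact Nat.ModEq.eq_of_lt_of_lt this hi hj
  have hfirst : ∀ j < r, ∀ a, H ((B + j) % L) a = 0 := by
    intro j hj a
    refine falling_unisolvent (q + 1) A (hqA' (by omega)) _ (hHbig _)
      (fun p => (B + j) / L + p) (fun _ _ _ _ hij => by simpa using hij) (fun p hp => ?_) a
    apply hval
    have : L * p ≤ L * q := Nat.mul_le_mul_left _ (by omega)
    omega
  have hCq : ∀ b, C q b = 0 := by
    refine falling_unisolvent r L hrL.le (C q) (fun b hb => hC q b (Or.inr (by omega)))
      (fun j => (B + j) % L) (fun i hi j hj => hinj i (by omega) j (by omega)) (fun j hj => ?_)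
    exact hfirst j hj q
  have hsecond : ∀ j < L, ∀ a, H ((B + j) % L) a = 0 := by
    intro j hj a
    refine falling_unisolvent q A hqA _ (fun a ha => ?_)
      (fun p => (B + j) / L + p) (fun _ _ _ _ hij => by simpa using hij) (fun p hp => ?_) a
    · rcases Nat.eq_or_lt_of_le ha with rfl | ha
      · simp [hH, hCq]
      · exact hHbig _ _ ha
    · apply hval
      have : L * (p + 1) ≤ L * q := Nat.mul_le_mul_left _ (by omega)
      rw [Nat.mul_add] at this
      omega
  exact falling_unisolvent L L le_rfl (C a) (fun b hb => hC a b (Or.inl hb))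
    (fun j => (B + j) % L) hinj (fun j hj => hsecond j hj a) b

lemma score_lt {K L : ℕ} (c : Fin K × Fin L) : L * (c.1 : ℕ) + (c.2 : ℕ) < K * L := by
  have h1 : L * ((c.1 : ℕ) + 1) ≤ L * K := Nat.mul_le_mul_left _ c.1.2
  have h2 := c.2.2
  rw [Nat.mul_add] at h1
  rw [Nat.mul_comm K L]
  omega

/-- A vertically ordered set consists of the orders of score less than its cardinality. -/
lemma VerticallyOrdered.mem_iff {K L : ℕ} (hL : 0 < L) {U : Finset (Fin K × Fin L)}
    (hU : VerticallyOrdered K L U) (d : Fin K × Fin L) :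
    d ∈ U ↔ L * (d.1 : ℕ) + (d.2 : ℕ) < U.card := by
  set s : Fin K × Fin L → ℕ := fun d => L * (d.1 : ℕ) + (d.2 : ℕ) with hs
  have hinj : Function.Injective s := by
    intro d d' h
    have h1 := congrArg (· / L) h
    have h2 := congrArg (· % L) h
    simp only [hs, Nat.mul_add_div hL, Nat.mul_add_mod, Nat.div_eq_of_lt d.2.2,
      Nat.div_eq_of_lt d'.2.2, Nat.mod_eq_of_lt d.2.2, Nat.mod_eq_of_lt d'.2.2] at h1 h2
    exact Prod.ext (Fin.ext (by simpa using h1)) (Fin.ext h2)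
  have hcard : (U.image s).card = U.card := Finset.card_image_of_injective _ hinj
  have hsub : U.image s ⊆ Finset.range U.card := by
    intro x hx
    obtain ⟨d, hd, rfl⟩ := Finset.mem_image.1 hx
    have : Finset.range (s d + 1) ⊆ U.image s := by
      intro y hy
      rw [Finset.mem_range] at hy
      have hyK : y < L * K := by
        have := score_lt d
        rw [Nat.mul_comm K L] at this
        simp only [hs] at hy
        omega
      have hdm := Nat.div_add_mod y L
      refine Finset.mem_image.2 ⟨(⟨y / L, Nat.div_lt_of_lt_mul hyK⟩, ⟨y % L, Nat.mod_lt _ hL⟩),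
        hU d hd _ ?_, hdm⟩
      simp only [hs] at hy
      simp only
      omega
    have := Finset.card_le_card this
    rw [Finset.card_range, hcard] at this
    exact Finset.mem_range.2 (by omega)
  have heq : U.image s = Finset.range U.card :=
    Finset.eq_of_subset_of_card_le hsub (by rw [hcard, Finset.card_range])
  have : s d ∈ U.image s ↔ s d ∈ Finset.range U.card := by rw [heq]
  rw [Finset.mem_image, Finset.mem_range] at this
  rw [← this]
  exact ⟨fun hd => ⟨d, hd, rfl⟩, fun ⟨d', hd', h⟩ => hinj h ▸ hd'⟩

/-! ### Weights that single out the blocks -/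

/-- The exponent of the rescaled entry in a row of worker `i` and a column of score `s`, where
`B` lists the left ends of the blocks. The half-integral separation of consecutive blocks is
cleared by the factor `2`. -/
def phase (B : ℕ → ℕ) (i s : ℕ) : ℤ :=
  ∑ j ∈ Finset.range i, (2 * ((s : ℤ) - B (j + 1)) + 1)

lemma phase_eq (B : ℕ → ℕ) (i s : ℕ) :
    phase B i s = 2 * i * s + phase B i 0 := by
  unfold phase
  induction i with
  | zero => simp
  | succ i ih =>
    rw [Finset.sum_range_succ, Finset.sum_range_succ, ih]
    push_cast
    ring

lemma phase_add (B : ℕ → ℕ) (s i p : ℕ) : phase B (i + p) s = phase B i s +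
    ∑ j ∈ Finset.range p, (2 * ((s : ℤ) - B (i + j + 1)) + 1) :=
  Finset.sum_range_add _ _ _

/-- For a column of score `s` in the block of worker `p`, the phase is maximal exactly for
worker `p`. -/
lemma phase_lt (B : ℕ → ℕ) (hB : Monotone B) (s p i : ℕ) (h1 : B p ≤ s) (h2 : s < B (p + 1))
    (hi : i ≠ p) : phase B i s < phase B p s := by
  rcases Nat.lt_or_gt_of_ne hi with hlt | hgt
  · obtain ⟨t, rfl⟩ := Nat.exists_eq_add_of_lt hlt
    rw [Nat.add_assoc, phase_add]
    have : 0 < ∑ j ∈ Finset.range (t + 1), (2 * ((s : ℤ) - B (i + j + 1)) + 1) := by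
      apply Finset.sum_pos _ ⟨0, by simp⟩
      intro j hj
      have := hB (show i + j + 1 ≤ i + t + 1 by simp at hj; omega)
      omega
    omega
  · obtain ⟨t, rfl⟩ := Nat.exists_eq_add_of_lt hgt
    rw [Nat.add_assoc, phase_add]
    have : ∑ j ∈ Finset.range (t + 1), (2 * ((s : ℤ) - B (p + j + 1)) + 1) < 0 := by
      apply Finset.sum_neg _ ⟨0, by simp⟩
      intro j hj
      have := hB (show p + 1 ≤ p + j + 1 by omega)
      omega
    omega

lemma exists_block (B : ℕ → ℕ) (h0 : B 0 = 0) (n s : ℕ) (hs : s < B n) :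
    ∃ p, B p ≤ s ∧ s < B (p + 1) := by
  have hex : ∃ j, s < B j := ⟨n, hs⟩
  classical
  have hf := Nat.find_spec hex
  have hpos : Nat.find hex ≠ 0 := by
    intro h
    rw [h, h0] at hf
    omega
  obtain ⟨p, hp⟩ := Nat.exists_eq_succ_of_ne_zero hpos
  rw [hp] at hf
  refine ⟨p, ?_, hf⟩
  have := Nat.find_min hex (m := p) (by omega)
  omega

lemma hEntry_pow (L a b k l i : ℕ) (T : ℝ) :
    hEntry a b k l (T ^ (2 * L * i)) (T ^ (2 * i)) =
      (Nat.descFactorial k a : ℝ) * (Nat.descFactorial l b : ℝ) *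
        T ^ (2 * (i : ℤ) * ((L * k + l : ℕ) : ℤ) - 2 * (i : ℤ) * ((L * a + b : ℕ) : ℤ)) := by
  unfold hEntry
  split_ifs with h
  · obtain ⟨⟨k, rfl⟩, ⟨l, rfl⟩⟩ := And.imp Nat.exists_eq_add_of_le Nat.exists_eq_add_of_le h
    rw [Nat.add_sub_cancel_left, Nat.add_sub_cancel_left, mul_assoc, ← pow_mul, ← pow_mul,
      ← pow_add, ← zpow_natCast]
    congr 2
    push_cast
    ring
  · rcases not_and_or.1 h with h | h
    · rw [Nat.descFactorial_of_lt (by omega : k < a)]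
      simp
    · rw [Nat.descFactorial_of_lt (by omega : l < b)]
      simp

/-! ### A nonsingular configuration -/

/-- The limit of the rescaled matrices: the row of order `d` of worker `i` is supported on the
columns with score in `[B i, B (i + 1))`. -/
def blockMatrix (K L n : ℕ) (U : Fin n → Finset (Fin K × Fin L)) (B : ℕ → ℕ)
    (e : (Σ i : Fin n, {d : Fin K × Fin L // d ∈ U i}) ≃ (Fin K × Fin L)) :
    Matrix (Fin K × Fin L) (Fin K × Fin L) ℝ :=
  Matrix.of fun r c =>
    if B (e.symm r).1 ≤ L * (c.1 : ℕ) + c.2 ∧ L * (c.1 : ℕ) + c.2 < B ((e.symm r).1 + 1) then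
      (Nat.descFactorial c.1 (e.symm r).2.1.1 : ℝ) * (Nat.descFactorial c.2 (e.symm r).2.1.2 : ℝ)
    else 0

lemma blockMatrix_det_ne_zero (K L n : ℕ) (hL : 0 < L)
    (U : Fin n → Finset (Fin K × Fin L)) (hord : ∀ i, VerticallyOrdered K L (U i))
    (B : ℕ → ℕ) (hB : Monotone B) (hBU : ∀ i : Fin n, B (i + 1) = B i + (U i).card)
    (hBn : B n = K * L)
    (e : (Σ i : Fin n, {d : Fin K × Fin L // d ∈ U i}) ≃ (Fin K × Fin L)) :
    (blockMatrix K L n U B e).det ≠ 0 := by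
  classical
  intro hdet
  obtain ⟨v, hv0, hv⟩ := Matrix.exists_vecMul_eq_zero_iff.2 hdet
  apply hv0
  have key : ∀ (i : Fin n) (d : {d : Fin K × Fin L // d ∈ U i}), v (e ⟨i, d⟩) = 0 := by
    intro i
    have hmem := (hord i).mem_iff hL
    -- The coefficients of worker `i`, extended by zero to all orders.
    set C : ℕ → ℕ → ℝ := fun a b =>
      if h : ∃ (ha : a < K) (hb : b < L), ((⟨a, ha⟩, ⟨b, hb⟩) : Fin K × Fin L) ∈ U i
      then v (e ⟨i, ⟨(⟨a, h.1⟩, ⟨b, h.2.1⟩), h.2.2⟩⟩) else 0 with hCdef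
    have hCin : ∀ d : {d : Fin K × Fin L // d ∈ U i}, C d.1.1 d.1.2 = v (e ⟨i, d⟩) := by
      intro d
      simp only [hCdef]
      rw [dif_pos ⟨d.1.1.2, d.1.2.2, d.2⟩]
    have hCout : ∀ d : Fin K × Fin L, d ∉ U i → C d.1 d.2 = 0 := by
      intro d hd
      simp only [hCdef]
      rw [dif_neg]
      rintro ⟨_, _, h⟩
      exact hd h
    have hm : B i + (U i).card ≤ K * L := by
      rw [← hBU, ← hBn]
      exact hB i.2
    have hC := block_unisolvent L (U i).card (B i) K hL (by rw [Nat.mul_comm]; omega) C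
      (by
        intro a b hab
        simp only [hCdef]
        rw [dif_neg]
        rintro ⟨ha, hb, h⟩
        rw [hmem] at h
        simp only at h
        omega)
      (by
        intro k l hl h1 h2
        have hk : k < K := by
          by_contra hcon
          have : L * K ≤ L * k := Nat.mul_le_mul_left _ (by omega)
          rw [Nat.mul_comm L K] at this
          omega
        have hcol := congrFun hv (⟨k, hk⟩, ⟨l, hl⟩)
        simp only [Matrix.vecMul, dotProduct, Pi.zero_apply] at hcol
        rw [← e.sum_comp, Fintype.sum_sigma, Finset.sum_eq_single i] at hcol
        · rw [← hcol, Finset.sum_range]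
          simp_rw [Finset.sum_range]
          rw [← Fintype.sum_prod_type' (fun (a : Fin K) (b : Fin L) => C a b *
            ((Nat.descFactorial k a : ℝ) * (Nat.descFactorial l b : ℝ))),
            ← Finset.sum_subset (Finset.subset_univ (U i)), ← Finset.sum_coe_sort]
          · refine Finset.sum_congr rfl fun d _ => ?_
            simp only [blockMatrix, Matrix.of_apply, Equiv.symm_apply_apply]
            rw [if_pos ⟨h1, by rw [hBU]; exact h2⟩, ← hCin d, Equiv.symm_apply_apply]
          · intro d _ hd
            rw [hCout d hd, zero_mul]
        · intro j _ hji
          apply Finset.sum_eq_zero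
          intro d _
          simp only [blockMatrix, Matrix.of_apply, Equiv.symm_apply_apply]
          rw [if_neg, mul_zero]
          rintro ⟨h3, h4⟩
          rcases lt_or_gt_of_ne hji with hlt | hgt
          · have := hB (show (j : ℕ) + 1 ≤ i from hlt)
            omega
          · have := hB (show (i : ℕ) + 1 ≤ j from hgt)
            rw [hBU] at this
            omega
        · simp)
    intro d
    rw [← hCin d]
    exact hC _ _
  funext r
  have := key (e.symm r).1 (e.symm r).2
  simpa using this

lemma exists_det_ne_zero (K L n : ℕ) (hL : 0 < L)
    (U : Fin n → Finset (Fin K × Fin L)) (hord : ∀ i, VerticallyOrdered K L (U i))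
    (hsum : ∑ i, (U i).card = K * L)
    (e : (Σ i : Fin n, {d : Fin K × Fin L // d ∈ U i}) ≃ (Fin K × Fin L)) :
    ∃ z, (interpMatrix K L n U e z).det ≠ 0 := by
  classical
  set B : ℕ → ℕ := fun i =>
    ∑ j ∈ Finset.range i, if h : j < n then (U ⟨j, h⟩).card else 0 with hBdef
  have hB : Monotone B := fun i j hij =>
    Finset.sum_le_sum_of_subset (Finset.range_subset_range.2 hij)
  have hBU : ∀ i : Fin n, B (i + 1) = B i + (U i).card := by
    intro i
    simp only [hBdef]
    rw [Finset.sum_range_succ, dif_pos i.2]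
  have hBn : B n = K * L := by
    rw [← hsum]
    simp only [hBdef]
    rw [Finset.sum_range]
    exact Finset.sum_congr rfl fun i _ => by rw [dif_pos i.2]
  have hblk : ∀ c : Fin K × Fin L, ∃ p, B p ≤ L * (c.1 : ℕ) + c.2 ∧
      L * (c.1 : ℕ) + c.2 < B (p + 1) := fun c =>
    exists_block B (by simp [hBdef]) n _ (by rw [hBn]; exact score_lt c)
  choose p hp1 hp2 using hblk
  set N : ℝ → Matrix (Fin K × Fin L) (Fin K × Fin L) ℝ := fun T => Matrix.of fun r c =>
    (Nat.descFactorial c.1 (e.symm r).2.1.1 : ℝ) *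
      (Nat.descFactorial c.2 (e.symm r).2.1.2 : ℝ) *
      T ^ (phase B (e.symm r).1 (L * (c.1 : ℕ) + c.2) - phase B (p c) (L * (c.1 : ℕ) + c.2))
    with hN
  have hlim : Tendsto N atTop (𝓝 (blockMatrix K L n U B e)) := by
    refine tendsto_pi_nhds.2 fun r => tendsto_pi_nhds.2 fun c => ?_
    simp only [hN, blockMatrix, Matrix.of_apply]
    by_cases hrc : ((e.symm r).1 : ℕ) = p c
    · rw [hrc, if_pos ⟨hp1 c, hp2 c⟩]
      simp
    · rw [if_neg]
      · have hlt := phase_lt B hB _ (p c) _ (hp1 c) (hp2 c) hrc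
        have := tendsto_const_mul_zpow_atTop_zero (𝕜 := ℝ)
          (c := (Nat.descFactorial c.1 (e.symm r).2.1.1 : ℝ) *
            (Nat.descFactorial c.2 (e.symm r).2.1.2 : ℝ)) (sub_neg.2 hlt)
        exact this
      · rintro ⟨h3, h4⟩
        have h5 := hp1 c
        have h6 := hp2 c
        rcases Nat.lt_or_gt_of_ne hrc with hlt | hgt
        · have := hB (show ((e.symm r).1 : ℕ) + 1 ≤ p c from hlt)
          omega
        · have := hB (show p c + 1 ≤ ((e.symm r).1 : ℕ) from hgt)
          omega
  have hdet : Tendsto (fun T => (N T).det) atTop (𝓝 (blockMatrix K L n U B e).det) :=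
    ((continuous_id.matrix_det).tendsto _).comp hlim
  have hev := (hdet.eventually_ne
    (blockMatrix_det_ne_zero K L n hL U hord B hB hBU hBn e)).and (eventually_gt_atTop 0)
  obtain ⟨T, hT, hT0⟩ := hev.exists
  refine ⟨fun i => (T ^ (2 * L * (i : ℕ)), T ^ (2 * (i : ℕ))), fun hz => hT ?_⟩
  -- `N T` arises from the interpolation matrix by rescaling rows and columns.
  set M := interpMatrix K L n U e fun i => (T ^ (2 * L * (i : ℕ)), T ^ (2 * (i : ℕ))) with hM
  have hNM : N T = Matrix.of fun r c =>
      T ^ (- phase B (p c) (L * (c.1 : ℕ) + c.2)) * (Matrix.of fun r c =>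
        T ^ (phase B (e.symm r).1 (L * ((e.symm r).2.1.1 : ℕ) + (e.symm r).2.1.2)) * M r c) r c := by
    ext r c
    simp only [hN, hM, interpMatrix, Matrix.of_apply]
    rw [hEntry_pow, mul_left_comm (T ^ phase B _ _), mul_left_comm (T ^ (-phase B _ _)),
      ← zpow_add₀ hT0.ne', ← zpow_add₀ hT0.ne']
    congr 2
    rw [phase_eq B (e.symm r).1, phase_eq B (e.symm r).1 (L * ((e.symm r).2.1.1 : ℕ) + _)]
    ring
  rw [hNM, Matrix.det_mul_row, Matrix.det_mul_column, hz, mul_zero, mul_zero]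

/-! ### From one configuration to almost all -/

lemma continuous_interpMatrix_det (K L n : ℕ) (U : Fin n → Finset (Fin K × Fin L))
    (e : (Σ i : Fin n, {d : Fin K × Fin L // d ∈ U i}) ≃ (Fin K × Fin L)) :
    Continuous fun z => (interpMatrix K L n U e z).det := by
  refine Continuous.matrix_det (continuous_pi fun r => continuous_pi fun c => ?_)
  simp only [interpMatrix, Matrix.of_apply, hEntry]
  split_ifs
  · fun_prop
  · fun_prop

/-- Homogeneity of the determinant, in the form of invariance of its zero set. -/
lemma interpMatrix_det_smul (K L n : ℕ) (U : Fin n → Finset (Fin K × Fin L))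
    (e : (Σ i : Fin n, {d : Fin K × Fin L // d ∈ U i}) ≃ (Fin K × Fin L))
    (z : Fin n → ℝ × ℝ) (t : ℝ) (ht : t ≠ 0) (h : (interpMatrix K L n U e (t • z)).det = 0) :
    (interpMatrix K L n U e z).det = 0 := by
  have heq : (Matrix.of fun r c : Fin K × Fin L =>
      t ^ ((c.1 : ℕ) + (c.2 : ℕ)) * interpMatrix K L n U e z r c) =
      Matrix.of fun r c => t ^ (((e.symm r).2.1.1 : ℕ) + ((e.symm r).2.1.2 : ℕ)) *
        interpMatrix K L n U e (t • z) r c := by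
    ext r c
    simp only [interpMatrix, Matrix.of_apply, hEntry]
    split_ifs with hc
    · obtain ⟨⟨k, hk⟩, ⟨l, hl⟩⟩ := And.imp Nat.exists_eq_add_of_le Nat.exists_eq_add_of_le hc
      rw [hk, hl, Nat.add_sub_cancel_left, Nat.add_sub_cancel_left]
      simp only [Pi.smul_apply, Prod.smul_fst, Prod.smul_snd, smul_eq_mul]
      ring
    · simp
  have h2 := congrArg Matrix.det heq
  rw [Matrix.det_mul_row, Matrix.det_mul_column, h, mul_zero] at h2
  refine (mul_eq_zero.1 h2).resolve_left ?_
  exact Finset.prod_ne_zero_iff.2 fun _ _ => pow_ne_zero _ ht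

lemma exists_polynomial_det_line (K L n : ℕ) (U : Fin n → Finset (Fin K × Fin L))
    (e : (Σ i : Fin n, {d : Fin K × Fin L // d ∈ U i}) ≃ (Fin K × Fin L))
    (y v : Fin n → ℝ × ℝ) :
    ∃ P : Polynomial ℝ, ∀ t : ℝ, P.eval t = (interpMatrix K L n U e (y + t • v)).det := by
  have hentry : ∀ (a b k l : ℕ) (x x' w w' : ℝ), ∃ P : Polynomial ℝ,
      ∀ t : ℝ, P.eval t = hEntry a b k l (x + t * x') (w + t * w') := by
    intro a b k l x x' w w'
    unfold hEntry
    split_ifs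
    · exact ⟨Polynomial.C ((Nat.descFactorial k a : ℝ) * (Nat.descFactorial l b : ℝ)) *
        (Polynomial.C x + Polynomial.C x' * Polynomial.X) ^ (k - a) *
        (Polynomial.C w + Polynomial.C w' * Polynomial.X) ^ (l - b), fun t => by simp [mul_comm t]⟩
    · exact ⟨0, fun t => by simp⟩
  choose P hP using hentry
  refine ⟨(Matrix.of fun r c : Fin K × Fin L => P (e.symm r).2.1.1 (e.symm r).2.1.2 c.1 c.2
    (y (e.symm r).1).1 (v (e.symm r).1).1 (y (e.symm r).1).2 (v (e.symm r).1).2).det,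
    fun t => ?_⟩
  rw [← Polynomial.coe_evalRingHom, RingHom.map_det]
  congr 1
  ext r c
  simp [interpMatrix, hP]

lemma volume_det_eq_zero_of_exists (K L n : ℕ) (U : Fin n → Finset (Fin K × Fin L))
    (e : (Σ i : Fin n, {d : Fin K × Fin L // d ∈ U i}) ≃ (Fin K × Fin L))
    (v : Fin n → ℝ × ℝ) (hv : (interpMatrix K L n U e v).det ≠ 0) :
    volume {z : Fin n → ℝ × ℝ | (interpMatrix K L n U e z).det = 0} = 0 := by
  have hcont := continuous_interpMatrix_det K L n U e
  have hopen : IsOpen {z : Fin n → ℝ × ℝ | (interpMatrix K L n U e z).det ≠ 0} :=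
    isOpen_ne_fun hcont continuous_const
  have hae := ae_mem_of_ae_add_linearMap_mem (LinearMap.toSpanSingleton ℝ (Fin n → ℝ × ℝ) v)
    (volume : Measure ℝ) (volume : Measure (Fin n → ℝ × ℝ)) hopen.measurableSet (by
      intro y
      obtain ⟨P, hP⟩ := exists_polynomial_det_line K L n U e y v
      have hP0 : P ≠ 0 := by
        -- Near the point at infinity of the line, the determinant is governed by `v`.
        have h1 : Tendsto (fun s : ℝ => (interpMatrix K L n U e (v + s • y)).det) (𝓝[≠] 0)
            (𝓝 (interpMatrix K L n U e v).det) := by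
          have : Continuous fun s : ℝ => (interpMatrix K L n U e (v + s • y)).det :=
            hcont.comp (by fun_prop)
          simpa using (this.tendsto 0).mono_left nhdsWithin_le_nhds
        obtain ⟨s, hs, hs0⟩ := ((h1.eventually_ne hv).and self_mem_nhdsWithin).exists
        have hs0 : s ≠ 0 := hs0
        rintro rfl
        apply hs
        apply interpMatrix_det_smul K L n U e _ s⁻¹ (inv_ne_zero hs0)
        rw [smul_add, smul_smul, inv_mul_cancel₀ hs0, one_smul, add_comm, ← hP]
        simp
      have hfin : {t : ℝ | P.IsRoot t}.Finite := Polynomial.finite_setOfPred_isRoot hP0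
      refine measure_mono_null ?_ (hfin.measure_zero volume)
      intro t ht
      simpa [Polynomial.IsRoot, hP] using ht)
  simpa [ae_iff] using hae

/-- **Corollary 1 (BPC-VO).**  If the derivative sets of the `n` workers are vertically ordered
and contain `KL` orders in total, then the corresponding `KL × KL` interpolation matrix is
nonsingular for almost all choices of the evaluation points: any `KL` computations received by
the master under the vertical computation order suffice for decoding almost surely. -/
theorem bpc_vo_recovery
    (K L n : ℕ) (hK : 0 < K) (hL : 0 < L)
    (U : Fin n → Finset (Fin K × Fin L))
    (hord : ∀ i, VerticallyOrdered K L (U i))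
    (hsum : ∑ i, (U i).card = K * L) :
    ∃ e : (Σ i : Fin n, {d : Fin K × Fin L // d ∈ U i}) ≃ (Fin K × Fin L),
      volume {z : Fin n → ℝ × ℝ | (interpMatrix K L n U e z).det = 0} = 0 := by
  have hcard : Fintype.card (Σ i : Fin n, {d : Fin K × Fin L // d ∈ U i}) =
      Fintype.card (Fin K × Fin L) := by
    simp [hsum]
  obtain ⟨e⟩ := Fintype.card_eq.1 hcard
  obtain ⟨v, hv⟩ := exists_det_ne_zero K L n hL U hord hsum e
  exact ⟨e, volume_det_eq_zero_of_exists K L n U e v hv⟩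
end
end

section
/- Higher-order derivative of a determinant (multinomial form, implicit in the proof of Lemma 1): Let n, m be positive integers and M : ℝ → Matrix(n, n, ℝ) be such that every entry is m-times differentiable. Then d^m/dt^m det(M(t)) = Σ_{c} (m! / Π_{i=1}^n c_i!) · det(M_c(t)), where the sum runs over all functions c : {1,…,n} → ℕ with Σ_{i=1}^n c_i = m, and M_c(t) is the matrix whose i-th row is the entrywise c_i-th derivative of the i-th row of M(t). -/
/-!
By the Leibniz formula the determinant is a signed sum, over permutations `σ`, of the products
`∏ i, M s i (σ i)`, so the claim follows by linearity from the multinomial Leibniz rule for a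
product of `n` scalar functions (`iteratedDeriv_prod_eq_sum_multinomial`). That rule is proved by
induction on the number of factors: the binomial Leibniz rule splits off the first factor, and
`m.choose a * ((m - a)! / ∏ i, (c i)!) = m! / (a! * ∏ i, (c i)!)` merges the coefficients.
Indexing the product by rows makes the order of differentiation `c i` in each factor independent
of `σ`, which is what allows the sum over `σ` to be reassembled into a determinant.
-/

/-- A tuple of length `k + 1` with sum `m` is a first entry `a ≤ m` followed by a tuple of length
`k` with sum `m - a`. -/
lemma sum_antidiagonalTuple_succ_eq (k m : ℕ) (F : (Fin (k + 1) → ℕ) → ℝ) :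
    ∑ c ∈ Finset.Nat.antidiagonalTuple (k + 1) m, F c =
      ∑ a ∈ Finset.range (m + 1), ∑ c ∈ Finset.Nat.antidiagonalTuple k (m - a),
        F (Fin.cons a c) := by
  rw [Finset.sum_sigma']
  refine Finset.sum_bij' (fun c _ => ⟨c 0, Fin.tail c⟩)
    (fun p _ => (Fin.cons p.1 p.2 : Fin (k + 1) → ℕ)) ?_ ?_ ?_ ?_ ?_
  · intro c hc
    simp only [Finset.Nat.mem_antidiagonalTuple, Fin.sum_univ_succ] at hc
    simp only [Finset.mem_sigma, Finset.mem_range, Finset.Nat.mem_antidiagonalTuple, Fin.tail]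
    omega
  · rintro ⟨a, c⟩ hp
    simp only [Finset.mem_sigma, Finset.mem_range, Finset.Nat.mem_antidiagonalTuple] at hp
    simp only [Finset.Nat.mem_antidiagonalTuple, Fin.sum_univ_succ, Fin.cons_zero, Fin.cons_succ]
    omega
  · intro c _
    simp
  · rintro ⟨a, c⟩ _
    simp
  · intro c _
    simp

/-- The multinomial Leibniz rule for a finite product of scalar functions. -/
lemma iteratedDeriv_prod_eq_sum_multinomial (k m : ℕ) (f : Fin k → ℝ → ℝ) (t : ℝ)
    (hf : ∀ i, ContDiff ℝ m (f i)) :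
    iteratedDeriv m (fun s => ∏ i, f i s) t =
      ∑ c ∈ Finset.Nat.antidiagonalTuple k m,
        ((m.factorial : ℝ) / ∏ i, ((c i).factorial : ℝ)) *
          ∏ i, iteratedDeriv (c i) (f i) t := by
  induction k generalizing m with
  | zero => cases m <;> simp [iteratedDeriv_const]
  | succ k ih =>
    have hsplit : (fun s => ∏ i, f i s) = f 0 * fun s => ∏ i : Fin k, f i.succ s := by
      funext s
      simp [Fin.prod_univ_succ]
    have htail : ContDiff ℝ m (fun s => ∏ i : Fin k, f i.succ s) :=
      contDiff_prod fun i _ => hf i.succ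
    rw [hsplit, iteratedDeriv_mul (hf 0).contDiffAt htail.contDiffAt,
      sum_antidiagonalTuple_succ_eq]
    refine Finset.sum_congr rfl fun a ha => ?_
    have ham : a ≤ m := Nat.lt_succ_iff.mp (Finset.mem_range.mp ha)
    rw [ih (m - a) (fun i => f i.succ)
      (fun i => (hf i.succ).of_le (by exact_mod_cast Nat.sub_le m a)), Finset.mul_sum]
    refine Finset.sum_congr rfl fun c _ => ?_
    simp only [Fin.prod_univ_succ, Fin.cons_zero, Fin.cons_succ]
    rw [Nat.cast_choose ℝ ham]
    have h1 : ((m - a).factorial : ℝ) ≠ 0 := by positivity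
    have h2 : (a.factorial : ℝ) ≠ 0 := by positivity
    have h3 : (∏ i, ((c i).factorial : ℝ)) ≠ 0 := by positivity
    field_simp

/-- **Higher-order derivative of a determinant (multinomial form).**  If every entry of the
matrix-valued function `M : ℝ → Matrix (Fin n) (Fin n) ℝ` is `m`-times differentiable, then
`d^m/dt^m det(M(t)) = Σ_c (m! / Π_i c_i!) · det(M_c(t))`, where the sum runs over all
`c : Fin n → ℕ` with `Σ_i c_i = m`, and `M_c(t)` is the matrix whose `i`-th row is the
entrywise `c_i`-th derivative of the `i`-th row of `M`. -/
theorem iteratedDeriv_det_eq_sum_multinomial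
    (n m : ℕ) (hn : 0 < n) (hm : 0 < m)
    (M : ℝ → Matrix (Fin n) (Fin n) ℝ)
    (hdiff : ∀ i j, ContDiff ℝ (m : ℕ∞) (fun s => M s i j)) (t : ℝ) :
    iteratedDeriv m (fun s => (M s).det) t =
      ∑ c ∈ Finset.Nat.antidiagonalTuple n m,
        ((m.factorial : ℝ) / ∏ i : Fin n, ((c i).factorial : ℝ)) *
          (Matrix.of fun i j : Fin n =>
            iteratedDeriv (c i) (fun s => M s i j) t).det := by
  have hM : ∀ i j, ContDiff ℝ m (fun s => M s i j) := fun i j => by exact_mod_cast hdiff i j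
  -- Transposing puts the permutation on the column index, so that products run over rows.
  have hdet : ∀ A : Matrix (Fin n) (Fin n) ℝ,
      A.det = ∑ σ : Equiv.Perm (Fin n), ((Equiv.Perm.sign σ : ℤ) : ℝ) * ∏ i, A i (σ i) := by
    intro A
    rw [← Matrix.det_transpose, Matrix.det_apply']
    simp only [Matrix.transpose_apply]
  simp only [hdet, Matrix.of_apply]
  rw [iteratedDeriv_fun_sum fun σ _ =>
    (contDiff_const.mul (contDiff_prod fun i _ => hM i (σ i))).contDiffAt]
  simp only [Finset.mul_sum]
  rw [Finset.sum_comm]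
  refine Finset.sum_congr rfl fun σ _ => ?_
  rw [iteratedDeriv_const_mul_field,
    iteratedDeriv_prod_eq_sum_multinomial n m (fun i s => M s i (σ i)) t fun i => hM i (σ i),
    Finset.mul_sum]
  exact Finset.sum_congr rfl fun c _ => mul_left_comm _ _ _
end

section
/- Worst-case recovery threshold of B-PROC (equation (14)): Let K, L be positive integers and let X, Y ⊆ ℝ be finite sets of pairwise distinct reals with |X| ≥ K and |Y| ≥ L. Set R = KL + (|Y| − L)(K − 1) + (|X| − K)(L − 1). Then (i) for every subset S ⊆ X×Y with |S| ≥ R, the evaluation map sending a bivariate polynomial p(x, y) = Σ_{0≤k<K, 0≤l<L} c_{k,l} x^k y^l to its values on S is injective (so the product polynomial can be decoded from any R received grid evaluations); and (ii) this is tight: there exists a subset S ⊆ X×Y with |S| = R − 1 and a nonzero polynomial of this form vanishing on S. -/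
/-! Write `k = K - 1` and `l = L - 1`. The threshold satisfies
`R - 1 = |X||Y| - (|X| - k)(|Y| - l)`, so the theorem says that the least number of nonzeros on
`X × Y` of a nonzero polynomial of bidegree at most `(k, l)` is `(|X| - k)(|Y| - l)`: the minimum
distance of a product of two Reed–Solomon codes.

For the lower bound (`le_card_nonzeros_grid`), some coefficient of a power of `y` is a nonzero
polynomial in `x`, so it is nonzero at no fewer than `|X| - k` points of `X`; at each of these the
polynomial in `y` is nonzero, hence has at least `|Y| - l` nonzeros in `Y`. Equality holds for
`∏ (x - x₀) * ∏ (y - y₀)`, with `x₀`, `y₀` ranging over `k` points of `X` and `l` points of `Y`. -/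

open Polynomial in
/-- A nonzero polynomial with `n + 1` coefficients has at most `n` zeros, stated as a lower bound
on its number of nonzeros in a finite set. -/
lemma card_le_card_nonzeros_add {n : ℕ} (d : Fin (n + 1) → ℝ) (hd : d ≠ 0) (X : Finset ℝ) :
    X.card ≤ (X.filter fun x => ∑ i, d i * x ^ (i : ℕ) ≠ 0).card + n := by
  classical
  set P : degreeLT ℝ (n + 1) := (degreeLTEquiv ℝ (n + 1)).symm d with hP
  have hev (x : ℝ) : (P : ℝ[X]).eval x = ∑ i, d i * x ^ (i : ℕ) := by
    rw [eval_eq_sum_degreeLTEquiv P.2]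
    simp [hP]
  have hP0 : (P : ℝ[X]) ≠ 0 := by
    simpa [hP] using hd
  have hdeg : (P : ℝ[X]).natDegree < n + 1 :=
    (natDegree_lt_iff_degree_lt hP0).2 (mem_degreeLT.1 P.2)
  have hz : (X.filter fun x => ¬ (∑ i, d i * x ^ (i : ℕ) ≠ 0)).card ≤ n := by
    refine le_trans ?_ (Nat.lt_succ_iff.1 hdeg)
    refine card_le_degree_of_subset_roots fun x hx => ?_
    have hx' := (Finset.mem_filter.1 hx).2
    rw [mem_roots hP0, IsRoot, hev]
    exact not_not.1 hx'
  have := X.card_filter_add_card_filter_not (fun x => ∑ i, d i * x ^ (i : ℕ) ≠ 0)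
  omega

/-- Grouping the bivariate polynomial by powers of `y`. -/
lemma bivariate_eq_sum {K L : ℕ} (c : Fin K × Fin L → ℝ) (x y : ℝ) :
    ∑ kl : Fin K × Fin L, c kl * x ^ (kl.1 : ℕ) * y ^ (kl.2 : ℕ) =
      ∑ j, (∑ i, c (i, j) * x ^ (i : ℕ)) * y ^ (j : ℕ) := by
  simp only [Fintype.sum_prod_type_right, Finset.sum_mul]

lemma le_card_nonzeros_grid {k l : ℕ} (c : Fin (k + 1) × Fin (l + 1) → ℝ) (hc : c ≠ 0)
    (X Y : Finset ℝ) :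
    (X.card - k) * (Y.card - l) ≤ ((X ×ˢ Y).filter fun q =>
      ∑ kl : Fin (k + 1) × Fin (l + 1),
        c kl * q.1 ^ (kl.1 : ℕ) * q.2 ^ (kl.2 : ℕ) ≠ 0).card := by
  classical
  obtain ⟨⟨i₀, j₀⟩, h0⟩ := Function.ne_iff.1 hc
  have hX := card_le_card_nonzeros_add (fun i => c (i, j₀)) (Function.ne_iff.2 ⟨i₀, h0⟩) X
  set X₁ := X.filter fun x => ∑ i, c (i, j₀) * x ^ (i : ℕ) ≠ 0
  rw [Finset.card_filter, Finset.sum_product]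
  calc (X.card - k) * (Y.card - l) ≤ X₁.card * (Y.card - l) :=
        Nat.mul_le_mul_right _ (by omega)
    _ = ∑ x ∈ X₁, (Y.card - l) := by simp
    _ ≤ ∑ x ∈ X₁, ∑ y ∈ Y, if ∑ kl : Fin (k + 1) × Fin (l + 1),
          c kl * x ^ (kl.1 : ℕ) * y ^ (kl.2 : ℕ) ≠ 0 then 1 else 0 := by
        refine Finset.sum_le_sum fun x hx => ?_
        have hY := card_le_card_nonzeros_add (fun j => ∑ i, c (i, j) * x ^ (i : ℕ))
          (Function.ne_iff.2 ⟨j₀, (Finset.mem_filter.1 hx).2⟩) Y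
        rw [← Finset.card_filter]
        simp only [bivariate_eq_sum]
        omega
    _ ≤ _ := Finset.sum_le_sum_of_subset (Finset.filter_subset _ _)

open Polynomial in
/-- The coefficients of the monic polynomial with simple zeros exactly at `Z`. -/
lemma exists_coeffs_vanishing (Z : Finset ℝ) {n : ℕ} (hn : Z.card = n) :
    ∃ d : Fin (n + 1) → ℝ, d (Fin.last n) = 1 ∧ ∀ x ∈ Z, ∑ i, d i * x ^ (i : ℕ) = 0 := by
  set P : ℝ[X] := ∏ z ∈ Z, (X - C z) with hP
  have hdeg : P.natDegree = n := by simp [hP, natDegree_prod_of_monic, monic_X_sub_C, hn]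
  have hm : P.Monic := monic_prod_of_monic _ _ fun z _ => monic_X_sub_C z
  refine ⟨fun i => P.coeff i, ?_, fun x hx => ?_⟩
  · simpa [← hdeg] using hm.coeff_natDegree
  · rw [Fin.sum_univ_eq_sum_range (fun i => P.coeff i * x ^ i), ← hdeg,
      ← eval_eq_sum_range, hP, eval_prod]
    exact Finset.prod_eq_zero hx (by simp)

/-- The threshold as `1` plus the number of grid points outside an
`(a - k) × (b - l)` subgrid. -/
lemma threshold_eq {a b k l : ℕ} (ha : k + 1 ≤ a) (hb : l + 1 ≤ b) :
    (k + 1) * (l + 1) + (b - (l + 1)) * (k + 1 - 1) + (a - (k + 1)) * (l + 1 - 1)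
      + (a - k) * (b - l) = a * b + 1 := by
  obtain ⟨a, rfl⟩ := Nat.exists_eq_add_of_le ha
  obtain ⟨b, rfl⟩ := Nat.exists_eq_add_of_le hb
  have h1 : k + 1 + a - k = a + 1 := by omega
  have h2 : l + 1 + b - l = b + 1 := by omega
  simp only [Nat.add_sub_cancel_left, Nat.add_sub_cancel, h1, h2]
  ring

/-- **Worst-case recovery threshold of B-PROC (equation (14)).**
Let `X, Y ⊆ ℝ` be finite grids of evaluation points with `|X| ≥ K`, `|Y| ≥ L`, and set
`R = KL + (|Y| − L)(K − 1) + (|X| − K)(L − 1)`.  Then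
(i) any `R` received grid evaluations determine the product polynomial: for every
`S ⊆ X × Y` with `|S| ≥ R`, the map sending a bivariate polynomial
`p(x, y) = Σ_{0≤k<K, 0≤l<L} c_{k,l} x^k y^l` to its values on `S` is injective; and
(ii) this is tight: there are `R − 1` grid points and a nonzero polynomial of this form
vanishing on all of them. -/
theorem bproc_worst_case_recovery_threshold
    (K L : ℕ) (hK : 0 < K) (hL : 0 < L)
    (X Y : Finset ℝ) (hX : K ≤ X.card) (hY : L ≤ Y.card) :
    (∀ S : Finset (ℝ × ℝ), S ⊆ X ×ˢ Y →
      K * L + (Y.card - L) * (K - 1) + (X.card - K) * (L - 1) ≤ S.card →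
      ∀ c c' : Fin K × Fin L → ℝ,
        (∀ q ∈ S,
            (∑ kl : Fin K × Fin L, c kl * q.1 ^ (kl.1 : ℕ) * q.2 ^ (kl.2 : ℕ)) =
              ∑ kl : Fin K × Fin L, c' kl * q.1 ^ (kl.1 : ℕ) * q.2 ^ (kl.2 : ℕ)) →
        c = c') ∧
    (∃ S : Finset (ℝ × ℝ), S ⊆ X ×ˢ Y ∧
      S.card = K * L + (Y.card - L) * (K - 1) + (X.card - K) * (L - 1) - 1 ∧
      ∃ c : Fin K × Fin L → ℝ, c ≠ 0 ∧
        ∀ q ∈ S,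
          (∑ kl : Fin K × Fin L, c kl * q.1 ^ (kl.1 : ℕ) * q.2 ^ (kl.2 : ℕ)) = 0) := by
  classical
  obtain ⟨k, rfl⟩ : ∃ k, K = k + 1 := ⟨K - 1, by omega⟩
  obtain ⟨l, rfl⟩ : ∃ l, L = l + 1 := ⟨L - 1, by omega⟩
  have hR := threshold_eq hX hY
  constructor
  · intro S hS hcard c c' h
    by_contra hne
    have hlow := le_card_nonzeros_grid (c - c') (sub_ne_zero.2 hne) X Y
    set T := (X ×ˢ Y).filter fun q => ∑ kl : Fin (k + 1) × Fin (l + 1),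
        (c - c') kl * q.1 ^ (kl.1 : ℕ) * q.2 ^ (kl.2 : ℕ) ≠ 0 with hT
    have hdisj : Disjoint S T := by
      refine Finset.disjoint_left.2 fun q hq hqT => (Finset.mem_filter.1 hqT).2 ?_
      simp only [Pi.sub_apply, sub_mul, Finset.sum_sub_distrib]
      exact sub_eq_zero.2 (h q hq)
    have hle := Finset.card_le_card (Finset.union_subset hS (Finset.filter_subset _ _ : T ⊆ _))
    rw [Finset.card_union_of_disjoint hdisj, Finset.card_product] at hle
    omega
  · obtain ⟨X₀, hX₀, hX₀c⟩ := Finset.exists_subset_card_eq (show k ≤ X.card by omega)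
    obtain ⟨Y₀, hY₀, hY₀c⟩ := Finset.exists_subset_card_eq (show l ≤ Y.card by omega)
    obtain ⟨d, hd1, hd⟩ := exists_coeffs_vanishing X₀ hX₀c
    obtain ⟨e, he1, he⟩ := exists_coeffs_vanishing Y₀ hY₀c
    refine ⟨(X ×ˢ Y) \ ((X \ X₀) ×ˢ (Y \ Y₀)), Finset.sdiff_subset, ?_,
      fun kl => d kl.1 * e kl.2, ?_, ?_⟩
    · have hsub : (X \ X₀) ×ˢ (Y \ Y₀) ⊆ X ×ˢ Y :=
        Finset.product_subset_product Finset.sdiff_subset Finset.sdiff_subset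
      rw [Finset.card_sdiff_of_subset hsub, Finset.card_product, Finset.card_product,
        Finset.card_sdiff_of_subset hX₀, Finset.card_sdiff_of_subset hY₀, hX₀c, hY₀c]
      omega
    · intro h0
      simpa [hd1, he1] using congrFun h0 (Fin.last k, Fin.last l)
    · rintro ⟨x, y⟩ hq
      have hfac : ∑ kl : Fin (k + 1) × Fin (l + 1),
          d kl.1 * e kl.2 * x ^ (kl.1 : ℕ) * y ^ (kl.2 : ℕ) =
            (∑ i, d i * x ^ (i : ℕ)) * ∑ j, e j * y ^ (j : ℕ) := by
        rw [Finset.sum_mul_sum, Fintype.sum_prod_type]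
        exact Finset.sum_congr rfl fun i _ => Finset.sum_congr rfl fun j _ => by ring
      simp only [hfac]
      have hmem : x ∈ X₀ ∨ y ∈ Y₀ := by
        simp only [Finset.mem_sdiff, Finset.mem_product] at hq
        tauto
      rcases hmem with hx | hy
      · rw [hd x hx, zero_mul]
      · rw [he y hy, mul_zero]
end

section
/- Correctness of univariate polynomial codes (UPC): Let K, L, r, s, c be positive integers with K | r and L | c, let A_1, …, A_K ∈ ℝ^{(r/K)×s} and B_1, …, B_L ∈ ℝ^{s×(c/L)}, and define the matrix-valued polynomials A(x) = Σ_{i=1}^K A_i x^{i−1} and B(x) = Σ_{j=1}^L B_j x^{K(j−1)}. Then (i) A(x)B(x) = Σ_{i=1}^K Σ_{j=1}^L A_i B_j x^{(i−1)+K(j−1)} and the exponent map (i, j) ↦ (i−1)+K(j−1) is a bijection from {1,…,K}×{1,…,L} onto {0, 1, …, KL−1}, so each product A_i B_j appears as a distinct coefficient of the degree-(KL−1) polynomial A(x)B(x); and (ii) consequently, for any KL pairwise distinct real points x_1, …, x_{KL}, the values A(x_1)B(x_1), …, A(x_{KL})B(x_{KL}) uniquely determine all the products A_i B_j (i ∈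 [1:K], j ∈ [1:L]). -/
/-!
The exponent map `(i, j) ↦ i + K * j` is the base-`K` digit expansion, hence a bijection onto
`Fin (K * L)`. Reindexing along it writes each entry of `A(x) B(x)` as a polynomial of degree
less than `K * L` whose coefficients are the corresponding entries of the products `A i * B j`.
Two such polynomials that agree at `K * L` distinct points have the same coefficients, because the
Vandermonde matrix of the points is invertible (`upc_coeff_unique`).
-/

/-- `i + K·j < K·L` for `i < K`, `j < L`. -/
theorem upc_index_lt {K L i j : ℕ} (hi : i < K) (hj : j < L) : i + K * j < K * L :=
  calc i + K * j < K + K * j := by omega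
    _ = K * (j + 1) := by ring
    _ ≤ K * L := Nat.mul_le_mul_left K hj

theorem upc_product_expand {K L m s n : ℕ} (A : Fin K → Matrix (Fin m) (Fin s) ℝ)
    (B : Fin L → Matrix (Fin s) (Fin n) ℝ) (x : ℝ) :
    (∑ i : Fin K, x ^ (i : ℕ) • A i) * (∑ j : Fin L, x ^ (K * (j : ℕ)) • B j) =
      ∑ i : Fin K, ∑ j : Fin L, x ^ ((i : ℕ) + K * (j : ℕ)) • (A i * B j) := by
  rw [Matrix.sum_mul]
  refine Finset.sum_congr rfl fun i _ => ?_
  rw [Matrix.mul_sum]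
  refine Finset.sum_congr rfl fun j _ => ?_
  rw [Matrix.smul_mul, Matrix.mul_smul, smul_smul, pow_add]

theorem upc_exponent_bijective (K L : ℕ) :
    Function.Bijective fun ij : Fin K × Fin L =>
      (⟨(ij.1 : ℕ) + K * (ij.2 : ℕ), upc_index_lt ij.1.isLt ij.2.isLt⟩ : Fin (K * L)) := by
  -- Domain and codomain both have `K * L` elements, so injectivity suffices.
  rw [Fintype.bijective_iff_injective_and_card]
  refine ⟨?_, by simp⟩
  rintro ⟨i, j⟩ ⟨i', j'⟩ h
  have h : (i : ℕ) + K * j = i' + K * j' := congrArg Fin.val h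
  have hi : (i : ℕ) = i' := by
    simpa [Nat.add_mul_mod_self_left, Nat.mod_eq_of_lt i.isLt, Nat.mod_eq_of_lt i'.isLt] using
      congrArg (· % K) h
  have hj : (j : ℕ) = j' := Nat.eq_of_mul_eq_mul_left i.pos (by omega)
  exact Prod.ext (Fin.ext hi) (Fin.ext hj)

/-- Scalar form of the decoding step, applied to each matrix entry: the coefficients `C` are
determined by the values at `K * L` distinct points. -/
theorem upc_coeff_unique {K L : ℕ} (C C' : Fin K → Fin L → ℝ) (x : Fin (K * L) → ℝ)
    (hx : Function.Injective x)
    (h : ∀ t, ∑ i : Fin K, ∑ j : Fin L, x t ^ ((i : ℕ) + K * (j : ℕ)) * C i j =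
      ∑ i : Fin K, ∑ j : Fin L, x t ^ ((i : ℕ) + K * (j : ℕ)) * C' i j)
    (i : Fin K) (j : Fin L) : C i j = C' i j := by
  let e := Equiv.ofBijective _ (upc_exponent_bijective K L)
  -- The difference of the two coefficient families, indexed by exponent.
  let v : Fin (K * L) → ℝ := fun t => C (e.symm t).1 (e.symm t).2 - C' (e.symm t).1 (e.symm t).2
  have hv : v = 0 := by
    refine Matrix.eq_zero_of_forall_index_sum_pow_mul_eq_zero hx fun t => ?_
    rw [← e.sum_comp, Fintype.sum_prod_type]
    simp only [v, Equiv.symm_apply_apply, mul_sub, Finset.sum_sub_distrib]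
    exact sub_eq_zero.mpr (h t)
  have := congrFun hv (e (i, j))
  simpa [v, sub_eq_zero] using this

/-- **Correctness of univariate polynomial codes (UPC).**
With `A(x) = Σ_{i=1}^K A_i x^{i−1}` and `B(x) = Σ_{j=1}^L B_j x^{K(j−1)}`:
(i) `A(x)B(x) = Σ_i Σ_j A_i B_j x^{(i−1)+K(j−1)}`, and the exponent map
`(i, j) ↦ (i−1) + K(j−1)` is a bijection from `[1:K] × [1:L]` onto `{0, …, KL−1}`, so each
product `A_i B_j` appears as a distinct coefficient of the degree-`(KL−1)` polynomial
`A(x)B(x)`;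
(ii) consequently, the values of `A(x)B(x)` at any `KL` pairwise distinct points uniquely
determine all the products `A_i B_j`. -/
theorem upc_correct
    (K L r s c : ℕ) (hK : 0 < K) (hL : 0 < L)
    (hKr : K ∣ r) (hLc : L ∣ c)
    (A : Fin K → Matrix (Fin (r / K)) (Fin s) ℝ)
    (B : Fin L → Matrix (Fin s) (Fin (c / L)) ℝ) :
    (∀ x : ℝ,
        (∑ i : Fin K, x ^ (i : ℕ) • A i) * (∑ j : Fin L, x ^ (K * (j : ℕ)) • B j) =
          ∑ i : Fin K, ∑ j : Fin L, x ^ ((i : ℕ) + K * (j : ℕ)) • (A i * B j)) ∧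
    (Function.Bijective fun ij : Fin K × Fin L =>
        (⟨(ij.1 : ℕ) + K * (ij.2 : ℕ), upc_index_lt ij.1.isLt ij.2.isLt⟩ : Fin (K * L))) ∧
    (∀ (A' : Fin K → Matrix (Fin (r / K)) (Fin s) ℝ)
        (B' : Fin L → Matrix (Fin s) (Fin (c / L)) ℝ)
        (x : Fin (K * L) → ℝ), Function.Injective x →
      (∀ t : Fin (K * L),
          (∑ i : Fin K, x t ^ (i : ℕ) • A i) * (∑ j : Fin L, x t ^ (K * (j : ℕ)) • B j) =
            (∑ i : Fin K, x t ^ (i : ℕ) • A' i) *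
              (∑ j : Fin L, x t ^ (K * (j : ℕ)) • B' j)) →
      ∀ (i : Fin K) (j : Fin L), A i * B j = A' i * B' j) := by
  refine ⟨upc_product_expand A B, upc_exponent_bijective K L, fun A' B' x hx h i j => ?_⟩
  ext a b
  refine upc_coeff_unique (fun i j => (A i * B j) a b) (fun i j => (A' i * B' j) a b) x hx
    (fun t => ?_) i j
  have ht := h t
  rw [upc_product_expand, upc_product_expand] at ht
  simpa only [Matrix.sum_apply, Matrix.smul_apply, smul_eq_mul] using congrFun (congrFun ht a) b
end
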